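/- Let n ≥ 1 and let f : ℝⁿ → ℝ be a non-zero smooth function with compact support. There exists a positive constant C = C(n) such that for all x ∈ ℝⁿ and t > 0, |J̃_n(t)f(x)| ≤ C (1 + t)^{-n/2 - 1} ‖f‖_{L¹}. -/

import Mathlib

open Real Set Filter MeasureTheory Metric
open scoped Nat Topology

noncomputable section

/-- The modified Bessel function of integer order `ν`. -/
def besselI (ν : ℕ) (s : ℝ) : ℝ :=
  ∑' j : ℕ, (1 / ((j ! : ℝ) * ((j + ν)! : ℝ))) * (s / 2) ^ (2 * j + ν)

/-- Odd-dimensional kernel `k_ℓ(s) = 2^{-ℓ} Σ_j (1/(j!(j+ℓ)!))(s/2)^{2j} = I_ℓ(s)/s^ℓ`. -/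
def kOdd (ℓ : ℕ) (s : ℝ) : ℝ :=
  (1 / 2 ^ ℓ) * ∑' j : ℕ, (1 / ((j ! : ℝ) * ((j + ℓ)! : ℝ))) * (s / 2) ^ (2 * j)

/-- Even-dimensional kernel `k_ℓ(s) = Σ_j s^{2j+1}/((2(j+ℓ))‼ (2j+1)‼)`. -/
def kEven (ℓ : ℕ) (s : ℝ) : ℝ :=
  ∑' j : ℕ, s ^ (2 * j + 1) / (((2 * (j + ℓ))‼ : ℝ) * (((2 * j + 1)‼ : ℝ)))

/-- `c_n`: `1` for `n = 1`, `2^{-(n+1)/2}π^{-(n-1)/2}` for odd `n > 1`,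
`2^{-(n+2)/2}π^{-n/2}` for even `n`. -/
def cn (n : ℕ) : ℝ :=
  if n = 1 then 1
  else if Odd n then (2 : ℝ) ^ (-((n : ℝ) + 1) / 2) * π ^ (-((n : ℝ) - 1) / 2)
  else (2 : ℝ) ^ (-((n : ℝ) + 2) / 2) * π ^ (-(n : ℝ) / 2)

/-- `J̃_n(t)f(x)`, defined case by case in the dimension `n`. -/
def Jtilde (n : ℕ) (f : EuclideanSpace ℝ (Fin n) → ℝ) (t : ℝ)
    (x : EuclideanSpace ℝ (Fin n)) : ℝ :=
  if n = 1 then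
    (exp (-t / 2) / 4) *
      ∫ y in closedBall x t,
        ((t / Real.sqrt (t ^ 2 - ‖x - y‖ ^ 2)) *
            besselI 1 ((1 / 2) * Real.sqrt (t ^ 2 - ‖x - y‖ ^ 2))
          - besselI 0 ((1 / 2) * Real.sqrt (t ^ 2 - ‖x - y‖ ^ 2))) * f y
  else if Odd n then
    (cn n * exp (-t / 2) / 2 ^ (n + 1)) *
      ∫ y in closedBall x t,
        (t * kOdd ((n + 1) / 2) ((1 / 2) * Real.sqrt (t ^ 2 - ‖x - y‖ ^ 2))
          - 2 * kOdd ((n - 1) / 2) ((1 / 2) * Real.sqrt (t ^ 2 - ‖x - y‖ ^ 2))) * f y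
  else
    (cn n * exp (-t / 2) / 2 ^ n) *
      ∫ y in closedBall x t,
        (t * kEven (n / 2 + 1) ((1 / 2) * Real.sqrt (t ^ 2 - ‖x - y‖ ^ 2))
          - 2 * kEven (n / 2) ((1 / 2) * Real.sqrt (t ^ 2 - ‖x - y‖ ^ 2))) * f y

section Decay

open Asymptotics

lemma rpow_isBigO_exp (p : ℝ) :
    (fun s : ℝ => (1 + s) ^ p) =O[𝓟 (Ici 0)] fun s => exp s := by
  obtain ⟨N, hN⟩ := exists_nat_ge p
  refine isBigO_principal.2 ⟨(N ! : ℝ) * exp 1, fun s hs => ?_⟩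
  have hs : 0 ≤ s := hs
  have h1 : (1 + s) ^ p ≤ (1 + s) ^ N := by
    rw [← rpow_natCast]
    exact rpow_le_rpow_of_exponent_le (by linarith) hN
  have h2 := pow_div_factorial_le_exp (x := 1 + s) (by linarith) N
  rw [div_le_iff₀ (by positivity), exp_add] at h2
  rw [norm_of_nonneg (by positivity), norm_of_nonneg (by positivity)]
  linarith

lemma one_isBigO_exp_mul_rpow (r : ℝ) :
    (fun _ : ℝ => (1 : ℝ)) =O[𝓟 (Ici 0)] fun s => exp s * (1 + s) ^ (-r) := by
  refine ((rpow_isBigO_exp r).mul (isBigO_refl (fun s : ℝ => (1 + s) ^ (-r)) _)).congr' ?_ .rfl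
  refine eventually_principal.2 fun s (hs : 0 ≤ s) => ?_
  simp [← rpow_add (by linarith : 0 < 1 + s)]

lemma id_isBigO_exp_mul_rpow (r : ℝ) :
    (fun s : ℝ => s) =O[𝓟 (Ici 0)] fun s => exp s * (1 + s) ^ (-r) := by
  have h : (fun s : ℝ => s) =O[𝓟 (Ici 0)] fun s => (1 + s) ^ (r + 1) * (1 + s) ^ (-r) := by
    refine isBigO_principal.2 ⟨1, fun s (hs : 0 ≤ s) => ?_⟩
    rw [← rpow_add (by linarith), norm_of_nonneg hs, norm_of_nonneg (by positivity)]
    norm_num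
  exact h.trans ((rpow_isBigO_exp (r + 1)).mul (isBigO_refl _ _))

/-- Dividing by `s` improves the decay by one order, away from the origin. -/
lemma isBigO_exp_mul_rpow_of_mul {g : ℝ → ℝ} {r r' : ℝ} (hr : r' = r + 1)
    (hg : (fun s => s * g s) =O[𝓟 (Ici 0)] fun s => exp s * (1 + s) ^ (-r))
    (hb : ∃ B, ∀ s ∈ Icc (0 : ℝ) 1, |g s| ≤ B) :
    g =O[𝓟 (Ici 0)] fun s => exp s * (1 + s) ^ (-r') := by
  obtain ⟨B, hB⟩ := hb
  have h : (fun s => (1 + s) * g s) =O[𝓟 (Ici 0)] fun s => exp s * (1 + s) ^ (-r) := by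
    have h1 : (fun s => (1 + s) * g s) =O[𝓟 (Icc 0 1)] fun s => exp s * (1 + s) ^ (-r) := by
      have : (fun s => (1 + s) * g s) =O[𝓟 (Icc 0 1)] fun _ => (1 : ℝ) := by
        refine isBigO_principal.2 ⟨2 * B, fun s hs => ?_⟩
        have := hB s hs
        rw [norm_mul, norm_of_nonneg (by linarith [hs.1]), norm_one, mul_one, norm_eq_abs]
        exact mul_le_mul (by linarith [hs.2]) this (abs_nonneg _) (by norm_num)
      exact this.trans ((one_isBigO_exp_mul_rpow r).mono
        (principal_mono.2 Icc_subset_Ici_self))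
    have h2 : (fun s => (1 + s) * g s) =O[𝓟 (Ici 1)] fun s => exp s * (1 + s) ^ (-r) := by
      have : (fun s => (1 + s) * g s) =O[𝓟 (Ici 1)] fun s => s * g s := by
        refine isBigO_principal.2 ⟨2, fun s (hs : 1 ≤ s) => ?_⟩
        rw [norm_mul, norm_mul, norm_of_nonneg (by linarith : 0 ≤ 1 + s),
          norm_of_nonneg (by linarith : 0 ≤ s), ← mul_assoc]
        gcongr
        linarith
      exact this.trans (hg.mono (principal_mono.2 (Ici_subset_Ici.2 zero_le_one)))
    have := h1.sup h2
    rwa [sup_principal, Icc_union_Ici_eq_Ici zero_le_one] at this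
  have := h.mul (isBigO_refl (fun s : ℝ => (1 + s)⁻¹) _)
  refine this.congr' ?_ ?_
  · refine eventually_principal.2 fun s (hs : 0 ≤ s) => ?_
    have : 1 + s ≠ 0 := by positivity
    field_simp
  · refine eventually_principal.2 fun s (hs : 0 ≤ s) => ?_
    have : 0 < 1 + s := by positivity
    simp only
    rw [mul_assoc, ← rpow_neg_one, ← rpow_add this, hr, neg_add]

/-- Decay of a sequence of functions obeying a Bessel-type three-term recurrence, deduced from
that of its first two members. -/
lemma isBigO_of_recurrence {k : ℕ → ℝ → ℝ} {q a : ℝ} {c : ℕ → ℝ}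
    (hrec : ∀ ν s, 0 ≤ s → k ν s = s ^ 2 * k (ν + 2) s + (2 * ν + a) * k (ν + 1) s + c ν * s)
    (hb : ∀ ν, ∃ B, ∀ s ∈ Icc (0 : ℝ) 1, |k ν s| ≤ B)
    (h₀ : k 0 =O[𝓟 (Ici 0)] fun s => exp s * (1 + s) ^ (-q))
    (h₁ : (fun s => k 0 s - s * k 1 s) =O[𝓟 (Ici 0)] fun s => exp s * (1 + s) ^ (-(q + 1)))
    (ν : ℕ) :
    k ν =O[𝓟 (Ici 0)] (fun s => exp s * (1 + s) ^ (-(q + ν))) ∧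
    (fun s => k ν s - s * k (ν + 1) s) =O[𝓟 (Ici 0)]
      fun s => exp s * (1 + s) ^ (-(q + ν + 1)) := by
  induction ν with
  | zero => simpa only [Nat.cast_zero, add_zero, zero_add] using And.intro h₀ h₁
  | succ ν ih =>
    obtain ⟨ihk, ihd⟩ := ih
    have ihd' : (fun s => k ν s - s * k (ν + 1) s) =O[𝓟 (Ici 0)]
        fun s => exp s * (1 + s) ^ (-(q + ν)) := by
      refine ihd.trans (isBigO_principal.2 ⟨1, fun s (hs : 0 ≤ s) => ?_⟩)
      rw [one_mul, norm_of_nonneg (by positivity), norm_of_nonneg (by positivity)]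
      exact mul_le_mul_of_nonneg_left
        (rpow_le_rpow_of_exponent_le (by linarith) (by linarith)) (exp_pos s).le
    have hk : k (ν + 1) =O[𝓟 (Ici 0)] fun s => exp s * (1 + s) ^ (-(q + (ν + 1 : ℕ))) := by
      refine isBigO_exp_mul_rpow_of_mul (r := q + ν) (by push_cast; ring) ?_ (hb _)
      exact (ihk.sub ihd').congr_left fun s => by ring
    refine ⟨hk, isBigO_exp_mul_rpow_of_mul (r := q + ν + 1) (by push_cast; ring) ?_ ?_⟩
    · have hk' := hk.const_mul_left (2 * ν + a)
      push_cast at hk'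
      rw [← add_assoc] at hk'
      refine ((hk'.sub ihd).add ((id_isBigO_exp_mul_rpow (q + ν + 1)).const_mul_left
        (c ν))).congr' (eventually_principal.2 fun s hs => ?_) .rfl
      have := hrec ν s hs
      simp only
      rw [this]
      ring
    · obtain ⟨B, hB⟩ := hb (ν + 1)
      obtain ⟨B', hB'⟩ := hb (ν + 1 + 1)
      refine ⟨B + B', fun s hs => (abs_sub _ _).trans (add_le_add (hB s hs) ?_)⟩
      rw [abs_mul, abs_of_nonneg hs.1]
      exact (mul_le_of_le_one_left (abs_nonneg _) hs.2).trans (hB' s hs)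

lemma exists_kernel_bound {k₀ k₁ : ℝ → ℝ} {p : ℝ} (hp : 0 ≤ p)
    (h₁ : k₁ =O[𝓟 (Ici 0)] fun s => exp s * (1 + s) ^ (-p))
    (h₀ : (fun s => k₀ s - s * k₁ s) =O[𝓟 (Ici 0)] fun s => exp s * (1 + s) ^ (-p)) :
    ∃ C, ∀ s t, 0 ≤ s → s ≤ t / 2 →
      exp (-t / 2) * |t * k₁ s - 2 * k₀ s| ≤ C * (1 + t) ^ (-p) := by
  obtain ⟨C₁, hC₁, h₁⟩ := h₁.exists_nonneg
  obtain ⟨C₀, hC₀, h₀⟩ := h₀.exists_nonneg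
  obtain ⟨A, hA, hexp⟩ := (rpow_isBigO_exp (p + 1)).exists_nonneg
  rw [isBigOWith_principal] at h₁ h₀ hexp
  refine ⟨(2 * C₁ + 2 * C₀) * A * 2 ^ p, fun s t hs hst => ?_⟩
  have h₁ := h₁ s hs
  have h₀ := h₀ s hs
  obtain ⟨u, rfl⟩ : ∃ u, t = 2 * (s + u) := ⟨t / 2 - s, by ring⟩
  have hu : 0 ≤ u := by linarith
  have hexp := hexp u hu
  rw [norm_of_nonneg (by positivity : 0 ≤ exp s * (1 + s) ^ (-p)), norm_eq_abs] at h₁ h₀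
  rw [norm_of_nonneg (by positivity), norm_of_nonneg (by positivity)] at hexp
  set w := exp s * (1 + s) ^ (-p) with hw
  have hw0 : 0 ≤ w := by positivity
  have hker : |2 * (s + u) * k₁ s - 2 * k₀ s| ≤ (2 * C₁ + 2 * C₀) * (1 + u) * w := by
    have : 2 * (s + u) * k₁ s - 2 * k₀ s = 2 * u * k₁ s - 2 * (k₀ s - s * k₁ s) := by ring
    rw [this]
    refine (abs_sub _ _).trans ?_
    rw [abs_mul (2 * u), abs_mul 2 (_ - _), abs_of_nonneg (by positivity : 0 ≤ 2 * u), abs_two]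
    have e1 : 2 * u * |k₁ s| ≤ 2 * u * (C₁ * w) := by gcongr
    have : 0 ≤ C₁ * w := by positivity
    have : 0 ≤ C₀ * w * u := by positivity
    nlinarith
  have hpow : (1 + s) ^ (-p) * (1 + u) ^ (-p) ≤ 2 ^ p * (1 + 2 * (s + u)) ^ (-p) := by
    rw [← mul_rpow (by positivity) (by positivity)]
    have : (2 : ℝ) ^ p * (1 + 2 * (s + u)) ^ (-p) = ((1 + 2 * (s + u)) / 2) ^ (-p) := by
      rw [div_rpow (by positivity) (by positivity), rpow_neg zero_le_two p, div_inv_eq_mul,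
        mul_comm]
    rw [this]
    exact rpow_le_rpow_of_nonpos (by positivity) (by nlinarith [mul_nonneg hs hu]) (by linarith)
  have hu' : exp (-u) * (1 + u) ≤ A * (1 + u) ^ (-p) := by
    rw [exp_neg, inv_mul_le_iff₀ (exp_pos _)]
    calc 1 + u = (1 + u) ^ (p + 1) * (1 + u) ^ (-p) := by
          rw [← rpow_add (by positivity)]; simp
      _ ≤ A * exp u * (1 + u) ^ (-p) := by gcongr
      _ = _ := by ring
  calc exp (-(2 * (s + u)) / 2) * |2 * (s + u) * k₁ s - 2 * k₀ s|
      ≤ exp (-(2 * (s + u)) / 2) * ((2 * C₁ + 2 * C₀) * (1 + u) * w) := by gcongr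
    _ = (2 * C₁ + 2 * C₀) * ((1 + s) ^ (-p) * (exp (-u) * (1 + u))) := by
      have : exp (-(2 * (s + u)) / 2) * exp s = exp (-u) := by
        rw [← exp_add]; ring_nf
      rw [hw, ← this]; ring
    _ ≤ (2 * C₁ + 2 * C₀) * ((1 + s) ^ (-p) * (A * (1 + u) ^ (-p))) := by gcongr
    _ = (2 * C₁ + 2 * C₀) * A * ((1 + s) ^ (-p) * (1 + u) ^ (-p)) := by ring
    _ ≤ (2 * C₁ + 2 * C₀) * A * (2 ^ p * (1 + 2 * (s + u)) ^ (-p)) := by gcongr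
    _ = _ := by ring

end Decay

section Odd

lemma summable_kOdd (ℓ : ℕ) (s : ℝ) :
    Summable fun j : ℕ => (1 / ((j ! : ℝ) * ((j + ℓ)! : ℝ))) * (s / 2) ^ (2 * j) := by
  refine .of_nonneg_of_le (fun j => ?_) (fun j => ?_)
    (summable_pow_div_factorial ((s / 2) ^ 2))
  · rw [pow_mul]; positivity
  · rw [← pow_mul, div_mul_eq_mul_div, one_mul]
    refine div_le_div_of_nonneg_left (by rw [pow_mul]; positivity) (by positivity) ?_
    exact le_mul_of_one_le_right (by positivity) (by exact_mod_cast (j + ℓ).factorial_pos)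

lemma kOdd_nonneg (ℓ : ℕ) (s : ℝ) : 0 ≤ kOdd ℓ s :=
  mul_nonneg (by positivity) (tsum_nonneg fun j => by rw [pow_mul]; positivity)

lemma kOdd_le_one (ℓ : ℕ) {s : ℝ} (hs : s ∈ Icc (0 : ℝ) 1) : kOdd ℓ s ≤ kOdd ℓ 1 := by
  refine mul_le_mul_of_nonneg_left ?_ (by positivity)
  refine (summable_kOdd ℓ s).tsum_le_tsum (fun j => ?_) (summable_kOdd ℓ 1)
  have := hs.1
  gcongr
  exact hs.2

lemma kOdd_zero (ℓ : ℕ) : kOdd ℓ 0 = 1 / (2 ^ ℓ * ℓ !) := by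
  rw [kOdd, tsum_eq_single 0 fun j hj => by simp [hj]]
  simp [mul_comm]

/-- The shift of summation index behind the recurrence and the derivative of `kOdd`. -/
lemma succ_mul_kOdd_term (ℓ : ℕ) (s : ℝ) (j : ℕ) : ((j + 1 : ℕ) : ℝ) *
    ((1 / (((j + 1)! : ℝ) * ((j + 1 + ℓ)! : ℝ))) * (s / 2) ^ (2 * (j + 1))) =
    (s / 2) ^ 2 * ((1 / ((j ! : ℝ) * ((j + (ℓ + 1))! : ℝ))) * (s / 2) ^ (2 * j)) := by
  rw [show j + 1 + ℓ = j + (ℓ + 1) by ring, Nat.factorial_succ j]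
  push_cast
  field_simp
  ring

lemma summable_mul_kOdd_term (ℓ : ℕ) (s : ℝ) : Summable fun j : ℕ =>
    (j : ℝ) * ((1 / ((j ! : ℝ) * ((j + ℓ)! : ℝ))) * (s / 2) ^ (2 * j)) :=
  (summable_nat_add_iff 1).1 (((summable_kOdd (ℓ + 1) s).mul_left ((s / 2) ^ 2)).congr
    fun j => (succ_mul_kOdd_term ℓ s j).symm)

lemma tsum_mul_kOdd_term (ℓ : ℕ) (s : ℝ) :
    ∑' j : ℕ, (j : ℝ) * ((1 / ((j ! : ℝ) * ((j + ℓ)! : ℝ))) * (s / 2) ^ (2 * j)) =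
      (s / 2) ^ 2 * (2 ^ (ℓ + 1) * kOdd (ℓ + 1) s) := by
  rw [(summable_mul_kOdd_term ℓ s).tsum_eq_zero_add]
  simp only [succ_mul_kOdd_term, tsum_mul_left, kOdd, Nat.cast_zero, zero_mul, zero_add]
  field_simp

lemma kOdd_recurrence (ν : ℕ) (s : ℝ) :
    kOdd ν s = s ^ 2 * kOdd (ν + 2) s + (2 * ν + 2) * kOdd (ν + 1) s := by
  have h1 := tsum_mul_kOdd_term (ν + 1) s
  have h2 : 2 ^ ν * kOdd ν s = ∑' j : ℕ, ((j : ℝ) *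
      ((1 / ((j ! : ℝ) * ((j + (ν + 1))! : ℝ))) * (s / 2) ^ (2 * j)) + (ν + 1) *
      ((1 / ((j ! : ℝ) * ((j + (ν + 1))! : ℝ))) * (s / 2) ^ (2 * j))) := by
    rw [kOdd, ← mul_assoc, mul_one_div_cancel (by positivity), one_mul]
    congr 1 with j
    rw [← add_assoc j, Nat.factorial_succ (j + ν)]
    push_cast
    field_simp
    ring
  rw [Summable.tsum_add (summable_mul_kOdd_term _ _) ((summable_kOdd _ _).mul_left _), h1,
    tsum_mul_left] at h2
  have h3 : ∑' j : ℕ, (1 / ((j ! : ℝ) * ((j + (ν + 1))! : ℝ))) * (s / 2) ^ (2 * j) =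
      2 ^ (ν + 1) * kOdd (ν + 1) s := by
    rw [kOdd]; field_simp
  rw [h3] at h2
  refine mul_left_cancel₀ (pow_ne_zero ν (two_ne_zero (α := ℝ))) (h2.trans ?_)
  rw [show ν + 1 + 1 = ν + 2 from rfl]
  ring

lemma hasDerivAt_kOdd (ℓ : ℕ) (s : ℝ) : HasDerivAt (kOdd ℓ) (s * kOdd (ℓ + 1) s) s := by
  set R := |s| + 1 with hR
  have hRpos : 0 < R := by positivity
  have hterm : ∀ (j : ℕ) (y : ℝ), HasDerivAt
      (fun y => (1 / ((j ! : ℝ) * ((j + ℓ)! : ℝ))) * (y / 2) ^ (2 * j))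
      ((1 / ((j ! : ℝ) * ((j + ℓ)! : ℝ))) * (j * (y / 2) ^ (2 * j - 1))) y := by
    intro j y
    have := (((hasDerivAt_id y).div_const 2).pow (2 * j)).const_mul
      (1 / ((j ! : ℝ) * ((j + ℓ)! : ℝ)))
    refine this.congr_deriv ?_
    simp only [id]
    push_cast
    ring
  have hmul : ∀ (j : ℕ) (y : ℝ), y / 2 * ((1 / ((j ! : ℝ) * ((j + ℓ)! : ℝ))) *
      (j * (y / 2) ^ (2 * j - 1))) =
      (j : ℝ) * ((1 / ((j ! : ℝ) * ((j + ℓ)! : ℝ))) * (y / 2) ^ (2 * j)) := by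
    intro j y
    rcases j with _ | j
    · simp
    · rw [show 2 * (j + 1) = 2 * (j + 1) - 1 + 1 by omega, pow_succ, Nat.add_sub_cancel]
      ring
  have hsum : Summable fun j : ℕ => (1 / ((j ! : ℝ) * ((j + ℓ)! : ℝ))) *
      (j * (R / 2) ^ (2 * j - 1)) := by
    refine (summable_mul_left_iff (a := R / 2) (by positivity)).1 ?_
    simpa only [hmul] using summable_mul_kOdd_term ℓ R
  have hmain := hasDerivAt_tsum_of_isPreconnected (t := Ioo (-R) R) (y₀ := s) (y := s) hsum
    isOpen_Ioo isPreconnected_Ioo (fun j y _ => hterm j y) (fun j y hy => ?_)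
    (abs_lt.1 (by linarith)) (summable_kOdd ℓ s) (abs_lt.1 (by linarith))
  · refine (hmain.const_mul (1 / 2 ^ ℓ)).congr_deriv ?_
    have h := tsum_mul_kOdd_term ℓ s
    simp only [← hmul, tsum_mul_left] at h
    rcases eq_or_ne s 0 with rfl | hs
    · rw [tsum_congr (g := fun _ => (0 : ℝ)) fun j => ?_]
      · simp
      · rcases j with _ | j
        · simp
        · simp [show 2 * (j + 1) - 1 = 2 * j + 1 by omega]
    · refine mul_left_cancel₀ (div_ne_zero hs two_ne_zero) ?_
      rw [mul_left_comm, h]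
      field_simp
      ring
  · rw [norm_mul, norm_mul, norm_pow, norm_of_nonneg (by positivity : (0 : ℝ) ≤ 1 / _),
      norm_of_nonneg (by positivity : (0 : ℝ) ≤ j), norm_div, norm_two]
    have : ‖y‖ ≤ R := (abs_lt.2 hy).le
    gcongr

lemma hasDerivAt_mul_kOdd_one (s : ℝ) :
    HasDerivAt (fun s => s * kOdd 1 s) (kOdd 0 s - kOdd 1 s) s := by
  refine ((hasDerivAt_id s).mul (hasDerivAt_kOdd 1 s)).congr_deriv ?_
  have := kOdd_recurrence 0 s
  simp only [id, Nat.cast_zero, zero_add, mul_zero] at this ⊢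
  rw [this]
  ring

lemma hasDerivAt_kOdd_diff (s : ℝ) :
    HasDerivAt (fun s => kOdd 0 s - s * kOdd 1 s) (s * kOdd 1 s - (kOdd 0 s - kOdd 1 s)) s :=
  (hasDerivAt_kOdd 0 s).sub (hasDerivAt_mul_kOdd_one s)

lemma one_le_exp_mul_kOdd_diff {s : ℝ} (hs : 0 ≤ s) :
    1 ≤ exp s * (kOdd 0 s - s * kOdd 1 s) := by
  have hmono : Monotone fun s => exp s * (kOdd 0 s - s * kOdd 1 s) := by
    refine monotone_of_hasDerivAt_nonneg
      (fun s => (Real.hasDerivAt_exp s).mul (hasDerivAt_kOdd_diff s)) fun s => ?_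
    have := mul_nonneg (exp_pos s).le (kOdd_nonneg 1 s)
    simp only [Pi.zero_apply]
    linarith
  simpa [kOdd_zero] using hmono hs

lemma kOdd_diff_nonneg {s : ℝ} (hs : 0 ≤ s) : 0 ≤ kOdd 0 s - s * kOdd 1 s :=
  nonneg_of_mul_nonneg_right (zero_le_one.trans (one_le_exp_mul_kOdd_diff hs)) (exp_pos s)

lemma kOdd_zero_le_two_mul {s : ℝ} (hs : 1 ≤ s) :
    kOdd 0 s ≤ 2 * s * (kOdd 0 s - s * kOdd 1 s) := by
  have hderiv (s : ℝ) : HasDerivAt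
      (fun s => exp s * (2 * s * (kOdd 0 s - s * kOdd 1 s) - kOdd 0 s) - s)
      (exp s * (kOdd 0 s - s * kOdd 1 s) - 1) s := by
    refine (((Real.hasDerivAt_exp s).mul ((((hasDerivAt_id s).const_mul 2).mul
      (hasDerivAt_kOdd_diff s)).sub (hasDerivAt_kOdd 0 s))).sub (hasDerivAt_id s)).congr_deriv ?_
    simp
    ring
  have hmono : MonotoneOn
      (fun s => exp s * (2 * s * (kOdd 0 s - s * kOdd 1 s) - kOdd 0 s) - s) (Ici 0) := by
    refine monotoneOn_of_hasDerivWithinAt_nonneg (convex_Ici 0)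
      (fun s _ => (hderiv s).continuousAt.continuousWithinAt)
      (fun s _ => (hderiv s).hasDerivWithinAt) fun s hs => ?_
    rw [interior_Ici] at hs
    exact sub_nonneg.2 (one_le_exp_mul_kOdd_diff (le_of_lt hs))
  have hs0 : 0 ≤ s := zero_le_one.trans hs
  have := hmono self_mem_Ici hs0 hs0
  simp only [kOdd_zero, exp_zero] at this
  norm_num at this
  have h : 0 ≤ exp s * (2 * s * (kOdd 0 s - s * kOdd 1 s) - kOdd 0 s) := by linarith
  exact sub_nonneg.1 (nonneg_of_mul_nonneg_right h (exp_pos s))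

lemma mul_kOdd_zero_sq_le {s : ℝ} (hs : 1 ≤ s) :
    s * kOdd 0 s ^ 2 ≤ (kOdd 0 1 * exp s) ^ 2 := by
  have hderiv (s : ℝ) : HasDerivAt (fun s => exp (-(2 * s)) * (s * kOdd 0 s ^ 2))
      (exp (-(2 * s)) * (kOdd 0 s * (kOdd 0 s - 2 * s * (kOdd 0 s - s * kOdd 1 s)))) s := by
    refine ((((hasDerivAt_id s).const_mul 2).neg.exp).mul
      ((hasDerivAt_id s).mul ((hasDerivAt_kOdd 0 s).pow 2))).congr_deriv ?_
    simp
    ring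
  have hanti : AntitoneOn (fun s => exp (-(2 * s)) * (s * kOdd 0 s ^ 2)) (Ici 1) := by
    refine antitoneOn_of_hasDerivWithinAt_nonpos (convex_Ici 1)
      (fun s _ => (hderiv s).continuousAt.continuousWithinAt)
      (fun s _ => (hderiv s).hasDerivWithinAt) fun s hs => ?_
    rw [interior_Ici] at hs
    exact mul_nonpos_of_nonneg_of_nonpos (exp_pos _).le (mul_nonpos_of_nonneg_of_nonpos
      (kOdd_nonneg 0 s) (sub_nonpos.2 (kOdd_zero_le_two_mul (le_of_lt hs))))
  have h1 : exp (-(2 * s)) * (s * kOdd 0 s ^ 2) ≤ exp (-(2 * 1)) * (1 * kOdd 0 1 ^ 2) :=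
    hanti self_mem_Ici hs hs
  have h2 : exp (-(2 * 1)) * (1 * kOdd 0 1 ^ 2) ≤ kOdd 0 1 ^ 2 := by
    rw [one_mul]
    exact mul_le_of_le_one_left (by positivity) (exp_le_one_iff.2 (by norm_num))
  have h3 := h1.trans h2
  rw [exp_neg, inv_mul_le_iff₀ (exp_pos _), two_mul, exp_add] at h3
  linarith

lemma mul_kOdd_diff_le {s : ℝ} (hs : 0 ≤ s) :
    s * (kOdd 0 s - s * kOdd 1 s) ≤ kOdd 0 s := by
  rcases le_total s 1 with h1 | h1
  · have := mul_nonneg hs (kOdd_nonneg 1 s)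
    exact (mul_le_of_le_one_left (kOdd_diff_nonneg hs) h1).trans (by linarith)
  have hderiv (s : ℝ) : HasDerivAt (fun s => kOdd 0 s - s * (kOdd 0 s - s * kOdd 1 s))
      ((s - 1) * (kOdd 0 s - s * kOdd 1 s)) s := by
    refine ((hasDerivAt_kOdd 0 s).sub ((hasDerivAt_id s).mul
      (hasDerivAt_kOdd_diff s))).congr_deriv ?_
    simp
    ring
  have hmono : MonotoneOn (fun s => kOdd 0 s - s * (kOdd 0 s - s * kOdd 1 s)) (Ici 1) := by
    refine monotoneOn_of_hasDerivWithinAt_nonneg (convex_Ici 1)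
      (fun s _ => (hderiv s).continuousAt.continuousWithinAt)
      (fun s _ => (hderiv s).hasDerivWithinAt) fun s hs => ?_
    rw [interior_Ici] at hs
    have hs : 1 < s := hs
    exact mul_nonneg (by linarith) (kOdd_diff_nonneg (by linarith))
  have h := hmono self_mem_Ici h1 h1
  have := kOdd_nonneg 1 1
  simp only at h
  linarith

lemma kOdd_base_decay : kOdd 0 =O[𝓟 (Ici 0)] (fun s => exp s * (1 + s) ^ (-(1 / 2) : ℝ)) ∧
    (fun s => kOdd 0 s - s * kOdd 1 s) =O[𝓟 (Ici 0)]
      fun s => exp s * (1 + s) ^ (-(1 / 2 + 1) : ℝ) := by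
  have hbound : kOdd 0 =O[𝓟 (Ici 0)] fun s => exp s * (1 + s) ^ (-(1 / 2) : ℝ) := by
    refine isBigO_exp_mul_rpow_of_mul (r := -(1 / 2)) (by norm_num) ?_
      ⟨kOdd 0 1, fun s hs => (abs_of_nonneg (kOdd_nonneg 0 s)).trans_le (kOdd_le_one 0 hs)⟩
    refine Asymptotics.isBigO_principal.2 ⟨kOdd 0 1, fun s (hs : 0 ≤ s) => ?_⟩
    have h0 := kOdd_nonneg 0 s
    have h1 := kOdd_nonneg 0 1
    rw [neg_neg, ← sqrt_eq_rpow, norm_of_nonneg (by positivity), norm_of_nonneg (by positivity)]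
    rcases le_total s 1 with hs1 | hs1
    · have : 1 ≤ exp s * √(1 + s) :=
        one_le_mul_of_one_le_of_one_le (one_le_exp hs) (one_le_sqrt.2 (by linarith))
      calc s * kOdd 0 s ≤ 1 * kOdd 0 1 :=
            mul_le_mul hs1 (kOdd_le_one 0 ⟨hs, hs1⟩) h0 zero_le_one
        _ ≤ kOdd 0 1 * (exp s * √(1 + s)) := by
            rw [one_mul]
            exact le_mul_of_one_le_right h1 this
    · refine le_of_sq_le_sq ?_ (by positivity)
      have h := mul_le_mul_of_nonneg_left (mul_kOdd_zero_sq_le hs1) hs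
      have h' := sq_nonneg (kOdd 0 1 * exp s)
      rw [← mul_assoc, mul_pow _ √(1 + s), sq_sqrt (by linarith)]
      nlinarith
  refine ⟨hbound, isBigO_exp_mul_rpow_of_mul rfl (.trans ?_ hbound) ⟨kOdd 0 1, fun s hs => ?_⟩⟩
  · refine Asymptotics.isBigO_principal.2 ⟨1, fun s (hs : 0 ≤ s) => ?_⟩
    rw [norm_of_nonneg (mul_nonneg hs (kOdd_diff_nonneg hs)), norm_of_nonneg (kOdd_nonneg 0 s),
      one_mul]
    exact mul_kOdd_diff_le hs
  · rw [abs_of_nonneg (kOdd_diff_nonneg hs.1)]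
    have := mul_nonneg hs.1 (kOdd_nonneg 1 s)
    linarith [kOdd_le_one 0 hs]

lemma kOdd_decay (ν : ℕ) :
    kOdd ν =O[𝓟 (Ici 0)] (fun s => exp s * (1 + s) ^ (-(1 / 2 + ν) : ℝ)) ∧
    (fun s => kOdd ν s - s * kOdd (ν + 1) s) =O[𝓟 (Ici 0)]
      fun s => exp s * (1 + s) ^ (-(1 / 2 + ν + 1) : ℝ) := by
  refine isBigO_of_recurrence (a := 2) (c := 0) (fun ν s _ => ?_) (fun ν => ⟨kOdd ν 1, ?_⟩)
    kOdd_base_decay.1 kOdd_base_decay.2 ν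
  · simpa using kOdd_recurrence ν s
  · intro s hs
    rw [abs_of_nonneg (kOdd_nonneg ν s)]
    exact kOdd_le_one ν hs

end Odd

section Even

lemma factorial_le_mul_doubleFactorial (ℓ j : ℕ) :
    (2 * j + 1)! ≤ (2 * (j + ℓ))‼ * (2 * j + 1)‼ := by
  rw [Nat.factorial_eq_mul_doubleFactorial, mul_comm]
  refine Nat.mul_le_mul_right _ ?_
  rw [Nat.doubleFactorial_two_mul, Nat.doubleFactorial_two_mul]
  exact Nat.mul_le_mul (Nat.pow_le_pow_right (by norm_num) (by omega))
    (Nat.factorial_le (by omega))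

lemma summable_kEven_of_nonneg (ℓ : ℕ) {s : ℝ} (hs : 0 ≤ s) : Summable fun j : ℕ =>
    s ^ (2 * j + 1) / (((2 * (j + ℓ))‼ : ℝ) * (((2 * j + 1)‼ : ℝ))) := by
  refine .of_nonneg_of_le (fun j => by positivity) (fun j => ?_) (hasSum_sinh s).summable
  refine div_le_div_of_nonneg_left (by positivity) (by positivity) ?_
  exact_mod_cast factorial_le_mul_doubleFactorial ℓ j

lemma kEven_nonneg (ℓ : ℕ) {s : ℝ} (hs : 0 ≤ s) : 0 ≤ kEven ℓ s :=
  tsum_nonneg fun j => by positivity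

lemma kEven_le_one (ℓ : ℕ) {s : ℝ} (hs : s ∈ Icc (0 : ℝ) 1) : kEven ℓ s ≤ kEven ℓ 1 := by
  have := hs.1
  refine (summable_kEven_of_nonneg ℓ this).tsum_le_tsum (fun j => ?_)
    (summable_kEven_of_nonneg ℓ zero_le_one)
  gcongr
  exact hs.2

lemma kEven_zero_eq (s : ℝ) : kEven 0 s = sinh s := by
  rw [sinh_eq_tsum, kEven]
  congr 1 with j
  rw [Nat.factorial_eq_mul_doubleFactorial, add_zero]
  push_cast
  ring

lemma mul_kEven_one_eq (s : ℝ) : s * kEven 1 s = cosh s - 1 := by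
  rw [cosh_eq_tsum, (hasSum_cosh s).summable.tsum_eq_zero_add, kEven, ← tsum_mul_left]
  simp only [mul_zero, pow_zero, Nat.factorial_zero, Nat.cast_one, div_one, add_sub_cancel_left]
  congr 1 with j
  rw [show 2 * (j + 1) = 2 * j + 1 + 1 by ring, Nat.factorial_eq_mul_doubleFactorial]
  push_cast
  ring

lemma kEven_recurrence (ν : ℕ) {s : ℝ} (hs : 0 ≤ s) :
    kEven ν s = s ^ 2 * kEven (ν + 2) s + (2 * ν + 1) * kEven (ν + 1) s +
      1 / ((2 * (ν + 1))‼ : ℝ) * s := by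
  have hdiff := (summable_kEven_of_nonneg ν hs).sub
    ((summable_kEven_of_nonneg (ν + 1) hs).mul_left (2 * (ν : ℝ) + 1))
  have key : kEven ν s - (2 * ν + 1) * kEven (ν + 1) s =
      1 / ((2 * (ν + 1))‼ : ℝ) * s + s ^ 2 * kEven (ν + 2) s := by
    rw [kEven, kEven, ← tsum_mul_left, ← (summable_kEven_of_nonneg ν hs).tsum_sub
      ((summable_kEven_of_nonneg (ν + 1) hs).mul_left _), hdiff.tsum_eq_zero_add, kEven,
      ← tsum_mul_left]
    congr 1
    · simp only [mul_zero, zero_add, mul_add, Nat.doubleFactorial_add_two, mul_one]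
      push_cast
      simp
      field_simp
      ring
    · congr 1 with j
      rw [show 2 * (j + 1 + (ν + 1)) = 2 * (j + 1 + ν) + 2 by ring,
        show 2 * (j + (ν + 2)) = 2 * (j + 1 + ν) + 2 by ring,
        show 2 * (j + 1) + 1 = 2 * j + 1 + 2 by ring, Nat.doubleFactorial_add_two,
        Nat.doubleFactorial_add_two]
      push_cast
      field_simp
      ring
  linarith

lemma kEven_base_decay : kEven 0 =O[𝓟 (Ici 0)] (fun s => exp s * (1 + s) ^ (-0 : ℝ)) ∧
    (fun s => kEven 0 s - s * kEven 1 s) =O[𝓟 (Ici 0)]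
      fun s => exp s * (1 + s) ^ (-(0 + 1) : ℝ) := by
  constructor
  · refine Asymptotics.isBigO_principal.2 ⟨1, fun s (hs : 0 ≤ s) => ?_⟩
    rw [kEven_zero_eq, norm_of_nonneg (sinh_nonneg_iff.2 hs)]
    have : 0 < exp (-s) := exp_pos _
    have : 0 < exp s := exp_pos _
    simp [sinh_eq]
    linarith
  · refine Asymptotics.IsBigO.trans ?_ (one_isBigO_exp_mul_rpow (0 + 1))
    refine Asymptotics.isBigO_principal.2 ⟨1, fun s (hs : 0 ≤ s) => ?_⟩
    have h : kEven 0 s - s * kEven 1 s = 1 - exp (-s) := by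
      rw [kEven_zero_eq, mul_kEven_one_eq, sinh_eq, cosh_eq]; ring
    have : exp (-s) ≤ 1 := exp_le_one_iff.2 (by linarith)
    rw [h, norm_of_nonneg (by linarith)]
    simpa using (exp_pos (-s)).le

lemma kEven_decay (ν : ℕ) :
    kEven ν =O[𝓟 (Ici 0)] (fun s => exp s * (1 + s) ^ (-(0 + ν) : ℝ)) ∧
    (fun s => kEven ν s - s * kEven (ν + 1) s) =O[𝓟 (Ici 0)]
      fun s => exp s * (1 + s) ^ (-(0 + ν + 1) : ℝ) := by
  refine isBigO_of_recurrence (k := kEven) (a := 1) (c := fun ν => 1 / ((2 * (ν + 1))‼ : ℝ))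
    (fun ν s hs => kEven_recurrence ν hs) (fun ν => ⟨kEven ν 1, ?_⟩)
    kEven_base_decay.1 kEven_base_decay.2 ν
  intro s hs
  rw [abs_of_nonneg (kEven_nonneg ν hs.1)]
  exact kEven_le_one ν hs

end Even

lemma besselI_eq_pow_mul_kOdd (ν : ℕ) (s : ℝ) : besselI ν s = s ^ ν * kOdd ν s := by
  rw [besselI, kOdd, ← mul_assoc, mul_one_div, ← div_pow, ← tsum_mul_left]
  congr 1 with j
  ring

lemma abs_mul_setIntegral_le {E : Type*} [MeasurableSpace E] {μ : Measure E} {S : Set E}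
    (hS : MeasurableSet S) {f K : E → ℝ} (hf : Integrable f μ) {a M : ℝ} (ha : 0 ≤ a) (hM : 0 ≤ M)
    (hK : ∀ y ∈ S, a * |K y| ≤ M) :
    |a * ∫ y in S, K y * f y ∂μ| ≤ M * ∫ y, |f y| ∂μ := by
  have hg := hf.abs.const_mul M
  rw [← integral_const_mul, ← integral_const_mul]
  calc |∫ y in S, a * (K y * f y) ∂μ| ≤ ∫ y in S, M * |f y| ∂μ := by
        rw [← norm_eq_abs]
        refine norm_integral_le_of_norm_le hg.restrict ((ae_restrict_mem hS).mono fun y hy => ?_)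
        rw [norm_eq_abs, abs_mul, abs_mul, abs_of_nonneg ha, ← mul_assoc]
        exact mul_le_mul_of_nonneg_right (hK y hy) (abs_nonneg _)
    _ ≤ ∫ y, M * |f y| ∂μ :=
        setIntegral_le_integral hg (.of_forall fun y => mul_nonneg hM (abs_nonneg _))

lemma half_sqrt_sub_sq_le {t r : ℝ} (ht : 0 ≤ t) : 1 / 2 * √(t ^ 2 - r ^ 2) ≤ t / 2 := by
  have : √(t ^ 2 - r ^ 2) ≤ t := sqrt_le_iff.2 ⟨ht, by nlinarith [sq_nonneg r]⟩
  linarith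

lemma cn_nonneg (n : ℕ) : 0 ≤ cn n := by
  unfold cn
  split_ifs <;> positivity

lemma exists_one_dim_kernel_bound : ∃ C, ∀ σ t : ℝ, 0 ≤ σ → σ ≤ t →
    exp (-t / 2) * |t / σ * besselI 1 (1 / 2 * σ) - besselI 0 (1 / 2 * σ)| ≤
      C * (1 + t) ^ (-(3 / 2) : ℝ) := by
  have hk1 := (kOdd_decay 1).1
  have hk0 := (kOdd_decay 0).2
  norm_num only [Nat.cast_one, Nat.cast_zero] at hk1 hk0
  obtain ⟨C, hC⟩ := exists_kernel_bound (p := 3 / 2) (by norm_num) hk1 hk0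
  obtain ⟨C', hC'⟩ := exists_kernel_bound (k₀ := fun _ => 1) (k₁ := fun _ => 0) (p := 3 / 2)
    (by norm_num) (Asymptotics.isBigO_zero _ _) (by simpa using one_isBigO_exp_mul_rpow (3 / 2))
  refine ⟨max C C' / 2, fun σ t hσ hσt => ?_⟩
  have hpos : 0 ≤ (1 + t) ^ (-(3 / 2) : ℝ) := rpow_nonneg (by linarith) _
  rcases hσ.eq_or_lt with rfl | hσ0
  · have h := (hC' 0 t le_rfl (by linarith)).trans
      (mul_le_mul_of_nonneg_right (le_max_right C C') hpos)
    norm_num [besselI_eq_pow_mul_kOdd, kOdd_zero] at h ⊢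
    linarith
  · have h := (hC (1 / 2 * σ) t (by linarith) (by linarith)).trans
      (mul_le_mul_of_nonneg_right (le_max_left C C') hpos)
    have e : t / σ * besselI 1 (1 / 2 * σ) - besselI 0 (1 / 2 * σ) =
        (t * kOdd 1 (1 / 2 * σ) - 2 * kOdd 0 (1 / 2 * σ)) / 2 := by
      rw [besselI_eq_pow_mul_kOdd, besselI_eq_pow_mul_kOdd]
      field_simp
    rw [e, abs_div, abs_two]
    linarith

lemma exists_odd_kernel_bound {n : ℕ} (hn : Odd n) : ∃ C, ∀ s t : ℝ, 0 ≤ s → s ≤ t / 2 →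
    exp (-t / 2) * |t * kOdd ((n + 1) / 2) s - 2 * kOdd ((n - 1) / 2) s| ≤
      C * (1 + t) ^ (-(n : ℝ) / 2 - 1) := by
  obtain ⟨m, rfl⟩ := hn
  rw [show (2 * m + 1 + 1) / 2 = m + 1 by omega, show (2 * m + 1 - 1) / 2 = m by omega,
    show -((2 * m + 1 : ℕ) : ℝ) / 2 - 1 = -(1 / 2 + m + 1) by push_cast; ring]
  refine exists_kernel_bound (by positivity) ?_ (kOdd_decay m).2
  simpa only [Nat.cast_add, Nat.cast_one, ← add_assoc] using (kOdd_decay (m + 1)).1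

lemma exists_even_kernel_bound {n : ℕ} (hn : Even n) : ∃ C, ∀ s t : ℝ, 0 ≤ s → s ≤ t / 2 →
    exp (-t / 2) * |t * kEven (n / 2 + 1) s - 2 * kEven (n / 2) s| ≤
      C * (1 + t) ^ (-(n : ℝ) / 2 - 1) := by
  obtain ⟨m, rfl⟩ := hn
  rw [show (m + m) / 2 = m by omega,
    show -((m + m : ℕ) : ℝ) / 2 - 1 = -(0 + m + 1) by push_cast; ring]
  refine exists_kernel_bound (by positivity) ?_ (kEven_decay m).2
  simpa only [Nat.cast_add, Nat.cast_one, ← add_assoc] using (kEven_decay (m + 1)).1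

lemma exists_Jtilde_bound (n : ℕ) :
    ∃ C, ∀ f : EuclideanSpace ℝ (Fin n) → ℝ, Integrable f →
      ∀ (x : EuclideanSpace ℝ (Fin n)) (t : ℝ), 0 < t →
        |Jtilde n f t x| ≤ C * (1 + t) ^ (-(n : ℝ) / 2 - 1) * ∫ y, |f y| := by
  by_cases h1 : n = 1
  · obtain ⟨C, hC⟩ := exists_one_dim_kernel_bound
    refine ⟨1 / 4 * max C 0, fun f hf x t ht => ?_⟩
    rw [Jtilde, if_pos h1]
    refine abs_mul_setIntegral_le measurableSet_closedBall hf (by positivity)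
      (by positivity) fun y _ => ?_
    have hp : -(n : ℝ) / 2 - 1 = -(3 / 2) := by rw [h1]; norm_num
    have h := hC (√(t ^ 2 - ‖x - y‖ ^ 2)) t (sqrt_nonneg _)
      (by linarith [half_sqrt_sub_sq_le (r := ‖x - y‖) ht.le])
    have h' := mul_le_mul_of_nonneg_right (le_max_left C 0)
      (by positivity : 0 ≤ (1 + t) ^ (-(3 / 2) : ℝ))
    rw [hp]
    linarith
  by_cases hodd : Odd n
  · obtain ⟨C, hC⟩ := exists_odd_kernel_bound hodd
    have hcn := cn_nonneg n
    refine ⟨cn n / 2 ^ (n + 1) * max C 0, fun f hf x t ht => ?_⟩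
    rw [Jtilde, if_neg h1, if_pos hodd]
    refine abs_mul_setIntegral_le measurableSet_closedBall hf (by positivity)
      (by positivity) fun y _ => ?_
    have h := hC (1 / 2 * √(t ^ 2 - ‖x - y‖ ^ 2)) t (by positivity) (half_sqrt_sub_sq_le ht.le)
    rw [mul_div_right_comm, mul_assoc, mul_assoc]
    refine mul_le_mul_of_nonneg_left (h.trans ?_) (by positivity)
    gcongr
    exact le_max_left _ _
  · obtain ⟨C, hC⟩ := exists_even_kernel_bound (Nat.not_odd_iff_even.1 hodd)
    have hcn := cn_nonneg n
    refine ⟨cn n / 2 ^ n * max C 0, fun f hf x t ht => ?_⟩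
    rw [Jtilde, if_neg h1, if_neg hodd]
    refine abs_mul_setIntegral_le measurableSet_closedBall hf (by positivity)
      (by positivity) fun y _ => ?_
    have h := hC (1 / 2 * √(t ^ 2 - ‖x - y‖ ^ 2)) t (by positivity) (half_sqrt_sub_sq_le ht.le)
    rw [mul_div_right_comm, mul_assoc, mul_assoc]
    refine mul_le_mul_of_nonneg_left (h.trans ?_) (by positivity)
    gcongr
    exact le_max_left _ _

/-- For `n ≥ 1` and a non-zero smooth compactly supported `f`, there is
`C = C(n) > 0` such that `|J̃_n(t)f(x)| ≤ C (1+t)^{-n/2-1} ‖f‖_{L¹}` for all `x` and `t > 0`. -/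
theorem Jtilde_decay (n : ℕ) (hn : 1 ≤ n) :
    ∃ C > (0 : ℝ), ∀ (f : EuclideanSpace ℝ (Fin n) → ℝ), f ≠ 0 →
      ContDiff ℝ (⊤ : ℕ∞) f → HasCompactSupport f →
      ∀ (x : EuclideanSpace ℝ (Fin n)) (t : ℝ), 0 < t →
        |Jtilde n f t x| ≤ C * (1 + t) ^ (-(n : ℝ) / 2 - 1) * ∫ y, |f y| := by
  obtain ⟨C, hC⟩ := exists_Jtilde_bound n
  refine ⟨max C 1, lt_max_of_lt_right one_pos, fun f _ hf hfc x t ht => ?_⟩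
  refine (hC f (hf.continuous.integrable_of_hasCompactSupport hfc) x t ht).trans ?_
  have : 0 ≤ ∫ y, |f y| := integral_nonneg fun y => abs_nonneg (f y)
  gcongr
  exact le_max_left _ _
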